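/- Let u, v ∈ ℝ^n with u, v ≥ 0 entrywise and let α ≥ 0. If Top_k(u) ≤ α·Top_k(v) for every k ∈ {1,…,n}, then ψ(u) ≤ α·ψ(v) for every symmetric monotone norm ψ : ℝ^n → ℝ. -/

import Mathlib

/-- The top-`k` norm: the sum of the `k` largest values among `|u 1|, …, |u n|`,
expressed as the supremum over all size-`k` subsets of the sum of absolute values. -/
noncomputable def topk {n : ℕ} (k : ℕ) (u : Fin n → ℝ) : ℝ :=
  sSup {t : ℝ | ∃ S : Finset (Fin n), S.card = k ∧ t = ∑ j ∈ S, |u j|}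

/-!
The top-`k` inequalities say that `u` is weakly majorized by `v`. If `u` were dominated by no point
of the convex hull of the rearrangements of `v`, then a nonnegative functional `c` would take a
strictly larger value at `u` than at every rearrangement of `v`; but summation by parts along a
decreasing order of `c` shows that arranging `v` in that same order contradicts this. Hence `u ≤ y`
for some `y` in the hull, and the sublevel set of `ψ` at `ψ v`, being convex and containing all
rearrangements of `v`, contains `y`.
-/

open Finset Pointwise

section LinearOrder

variable {ι R : Type*} [LinearOrder ι]

theorem sum_mul_nonneg_of_antitoneOn [Ring R] [PartialOrder R] [IsOrderedRing R]
    {s : Finset ι} {c d : ι → R} (hc : AntitoneOn c s) (hc_nonneg : ∀ i ∈ s, 0 ≤ c i)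
    (hd : ∀ j ∈ s, 0 ≤ ∑ i ∈ s with i ≤ j, d i) : 0 ≤ ∑ i ∈ s, c i * d i := by
  induction s using Finset.induction_on_max generalizing c with
  | empty => simp
  | insert a s ha ih =>
    have ha_notMem : a ∉ s := fun h ↦ (ha a h).false
    have hd_s : ∀ j ∈ s, 0 ≤ ∑ i ∈ s with i ≤ j, d i := fun j hj ↦ by
      simpa [filter_insert, (ha j hj).not_ge] using hd j (mem_insert_of_mem hj)
    have hd_total : 0 ≤ ∑ i ∈ insert a s, d i := by
      have h_filter : {i ∈ insert a s | i ≤ a} = insert a s :=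
        filter_true_of_mem (forall_mem_insert _ _ _ |>.2 ⟨le_rfl, fun i hi ↦ (ha i hi).le⟩)
      simpa only [h_filter] using hd a (mem_insert_self a s)
    have h_shifted : 0 ≤ ∑ i ∈ s, (c i - c a) * d i :=
      ih (fun i hi j hj hij ↦ sub_le_sub_right
          (hc (mem_insert_of_mem hi) (mem_insert_of_mem hj) hij) _)
        (fun i hi ↦ sub_nonneg.2 <|
          hc (mem_insert_of_mem hi) (mem_insert_self a s) (ha i hi).le) hd_s
    calc 0 ≤ c a * ∑ i ∈ insert a s, d i + ∑ i ∈ s, (c i - c a) * d i :=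
          add_nonneg (mul_nonneg (hc_nonneg a (mem_insert_self a s)) hd_total) h_shifted
      _ = ∑ i ∈ insert a s, c i * d i := by
          simp only [sum_insert ha_notMem, sub_mul, sum_sub_distrib, mul_add, mul_sum]
          abel

theorem sum_le_sum_Iic_of_antitone [LocallyFiniteOrderBot ι] [AddCommMonoid R] [PartialOrder R]
    [IsOrderedCancelAddMonoid R] {w : ι → R} (hw : Antitone w) {s : Finset ι} {j : ι}
    (hs : #s = #(Iic j)) : ∑ i ∈ s, w i ≤ ∑ i ∈ Iic j, w i := by
  rw [← sum_sdiff_le_sum_sdiff]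
  calc ∑ i ∈ s \ Iic j, w i ≤ #(s \ Iic j) • w j :=
        sum_le_card_nsmul _ _ _ fun i hi ↦ hw <|
          le_of_not_ge fun hij ↦ (mem_sdiff.1 hi).2 (mem_Iic.2 hij)
    _ = #(Iic j \ s) • w j := by rw [card_sdiff_comm hs]
    _ ≤ ∑ i ∈ Iic j \ s, w i :=
        card_nsmul_le_sum _ _ _ fun i hi ↦ hw <| mem_Iic.1 (mem_sdiff.1 hi).1

end LinearOrder

theorem exists_perm_antitone_comp {α : Type*} [LinearOrder α] {n : ℕ} (f : Fin n → α) :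
    ∃ σ : Equiv.Perm (Fin n), Antitone (f ∘ σ) :=
  ⟨Tuple.sort (OrderDual.toDual ∘ f), Tuple.monotone_sort (OrderDual.toDual ∘ f)⟩

section topk

variable {n : ℕ}

theorem sum_abs_le_topk (S : Finset (Fin n)) (u : Fin n → ℝ) : ∑ j ∈ S, |u j| ≤ topk #S u := by
  refine le_csSup ⟨∑ j, |u j|, ?_⟩ ⟨S, rfl, rfl⟩
  rintro _ ⟨T, -, rfl⟩
  exact sum_le_univ_sum_of_nonneg fun j ↦ abs_nonneg (u j)

theorem topk_smul (k : ℕ) (α : ℝ) (u : Fin n → ℝ) : topk k (α • u) = |α| * topk k u := by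
  rw [topk, topk, ← smul_eq_mul, ← Real.sSup_smul_of_nonneg (abs_nonneg α)]
  congr 1
  ext t
  simp [Set.mem_smul_set, abs_mul, mul_sum, eq_comm]

theorem topk_comp_perm (k : ℕ) (u : Fin n → ℝ) (π : Equiv.Perm (Fin n)) :
    topk k (u ∘ π) = topk k u := by
  rw [topk, topk]
  congr 1
  ext t
  refine (Equiv.finsetCongr π).exists_congr fun S ↦ ?_
  simp

theorem topk_succ_of_antitone {w : Fin n → ℝ} (hw : Antitone w) (hw_nonneg : 0 ≤ w) (j : Fin n) :
    topk (j + 1) w = ∑ i ∈ Iic j, w i := by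
  have h_abs (S : Finset (Fin n)) : ∑ i ∈ S, |w i| = ∑ i ∈ S, w i :=
    sum_congr rfl fun i _ ↦ abs_of_nonneg (hw_nonneg i)
  refine le_antisymm (csSup_le ⟨_, Iic j, Fin.card_Iic j, rfl⟩ ?_) ?_
  · rintro _ ⟨S, hS, rfl⟩
    rw [h_abs]
    exact sum_le_sum_Iic_of_antitone hw (hS.trans (Fin.card_Iic j).symm)
  · simpa only [h_abs, Fin.card_Iic] using sum_abs_le_topk (Iic j) w

end topk

theorem exists_ge_of_forall_nonneg_strongDual {E : Type*} [AddCommGroup E] [Module ℝ E]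
    [TopologicalSpace E] [IsTopologicalAddGroup E] [ContinuousSMul ℝ E] [LocallyConvexSpace ℝ E]
    [PartialOrder E] [IsOrderedAddMonoid E] [PosSMulMono ℝ E] [OrderClosedTopology E]
    {K : Set E} (hK_convex : Convex ℝ K) (hK_compact : IsCompact K) {u : E}
    (h : ∀ f : StrongDual ℝ E, (∀ x, 0 ≤ x → 0 ≤ f x) → ∃ y ∈ K, f u ≤ f y) :
    ∃ y ∈ K, u ≤ y := by
  by_contra! h_not_le
  have h_disjoint : Disjoint ((· - u) '' K) (ProperCone.positive ℝ E : Set E) := by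
    rw [Set.disjoint_left]
    rintro _ ⟨y, hy, rfl⟩ h_nonneg
    exact h_not_le y hy (sub_nonneg.1 h_nonneg)
  have h_convex : Convex ℝ ((· - u) '' K) := by
    simpa only [Set.sub_singleton] using hK_convex.sub (convex_singleton u)
  obtain ⟨f, hf_nonneg, hf_neg⟩ := (ProperCone.positive ℝ E).hyperplane_separation h_convex
    (hK_compact.image (continuous_id.sub continuous_const)) h_disjoint
  obtain ⟨y, hy, hfy⟩ := h f hf_nonneg
  have h_lt : f (y - u) < 0 := hf_neg _ ⟨y, hy, rfl⟩
  rw [map_sub, sub_neg] at h_lt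
  exact h_lt.not_ge hfy

section Majorization

variable {n : ℕ} {u v : Fin n → ℝ}

theorem exists_perm_dotProduct_le_of_topk_le (hu : 0 ≤ u) (hv : 0 ≤ v)
    (htop : ∀ k, 1 ≤ k → k ≤ n → topk k u ≤ topk k v) {c : Fin n → ℝ} (hc : 0 ≤ c) :
    ∃ π : Equiv.Perm (Fin n), c ⬝ᵥ u ≤ c ⬝ᵥ (v ∘ π) := by
  obtain ⟨σ, hσ⟩ := exists_perm_antitone_comp c
  obtain ⟨τ, hτ⟩ := exists_perm_antitone_comp v
  have h_partial (j : Fin n) : ∑ i ∈ Iic j, u (σ i) ≤ ∑ i ∈ Iic j, v (τ i) :=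
    calc ∑ i ∈ Iic j, u (σ i) = ∑ i ∈ Iic j, |(u ∘ σ) i| :=
          sum_congr rfl fun i _ ↦ (abs_of_nonneg (hu (σ i))).symm
      _ ≤ topk (j + 1) (u ∘ σ) := by simpa only [Fin.card_Iic] using sum_abs_le_topk (Iic j) (u ∘ σ)
      _ = topk (j + 1) u := topk_comp_perm _ u σ
      _ ≤ topk (j + 1) v := htop _ (by lia) (by lia)
      _ = topk (j + 1) (v ∘ τ) := (topk_comp_perm _ v τ).symm
      _ = ∑ i ∈ Iic j, v (τ i) := topk_succ_of_antitone hτ (fun i ↦ hv (τ i)) j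
  have h_by_parts : 0 ≤ ∑ i, c (σ i) * (v (τ i) - u (σ i)) :=
    sum_mul_nonneg_of_antitoneOn (hσ.antitoneOn _) (fun i _ ↦ hc (σ i)) fun j _ ↦ by
      simpa only [filter_ge_eq_Iic, sum_sub_distrib, sub_nonneg] using h_partial j
  refine ⟨σ.symm.trans τ, ?_⟩
  calc c ⬝ᵥ u = ∑ i, c (σ i) * u (σ i) := (Equiv.sum_comp σ fun i ↦ c i * u i).symm
    _ ≤ ∑ i, c (σ i) * v (τ i) := by
        simpa only [mul_sub, sum_sub_distrib, sub_nonneg] using h_by_parts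
    _ = c ⬝ᵥ (v ∘ σ.symm.trans τ) := by
        simpa [dotProduct] using Equiv.sum_comp σ fun i ↦ c i * v (τ (σ.symm i))

theorem exists_mem_convexHull_perm_ge_of_topk_le (hu : 0 ≤ u) (hv : 0 ≤ v)
    (htop : ∀ k, 1 ≤ k → k ≤ n → topk k u ≤ topk k v) :
    ∃ y ∈ convexHull ℝ (Set.range fun π : Equiv.Perm (Fin n) ↦ v ∘ π), u ≤ y := by
  refine exists_ge_of_forall_nonneg_strongDual (convex_convexHull ℝ _)
    ((Set.finite_range _).isCompact_convexHull (𝕜 := ℝ)) fun f hf ↦ ?_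
  have hf_eq_dotProduct (x : Fin n → ℝ) : f x = (fun i ↦ f (Pi.single i 1)) ⬝ᵥ x := by
    conv_lhs => rw [pi_eq_sum_univ' x]
    simp [dotProduct, mul_comm]
  obtain ⟨π, hπ⟩ := exists_perm_dotProduct_le_of_topk_le hu hv htop
    (c := fun i ↦ f (Pi.single i 1)) fun i ↦ hf _ (Pi.single_nonneg.2 zero_le_one)
  refine ⟨v ∘ π, subset_convexHull ℝ _ ⟨π, rfl⟩, ?_⟩
  rwa [hf_eq_dotProduct u, hf_eq_dotProduct]

theorem majorization_symmetric_monotone_norm_general {β : Type*} [Preorder β]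
    (hu : 0 ≤ u) (hv : 0 ≤ v) {ψ : (Fin n → ℝ) → β}
    (hψ_convex : QuasiconvexOn ℝ (Set.Ici 0) ψ) (hψ_mono : MonotoneOn ψ (Set.Ici 0))
    (hψ_sym : ∀ w, 0 ≤ w → ∀ π : Equiv.Perm (Fin n), ψ (w ∘ π) = ψ w)
    (htop : ∀ k, 1 ≤ k → k ≤ n → topk k u ≤ topk k v) : ψ u ≤ ψ v := by
  obtain ⟨y, hy_hull, huy⟩ := exists_mem_convexHull_perm_ge_of_topk_le hu hv htop
  have h_hull : convexHull ℝ (Set.range fun π : Equiv.Perm (Fin n) ↦ v ∘ π) ⊆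
      {x ∈ Set.Ici 0 | ψ x ≤ ψ v} := by
    refine convexHull_min ?_ (hψ_convex (ψ v))
    rintro _ ⟨π, rfl⟩
    exact ⟨fun i ↦ hv (π i), (hψ_sym v hv π).le⟩
  obtain ⟨hy_nonneg, hψy⟩ := h_hull hy_hull
  exact (hψ_mono hu hy_nonneg huy).trans hψy

end Majorization

/-- If `u, v ≥ 0`, `α ≥ 0` and `Top_k(u) ≤ α·Top_k(v)` for every `k ∈ {1,…,n}`, then
`ψ(u) ≤ α·ψ(v)` for every symmetric monotone norm `ψ : ℝ^n → ℝ`. -/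
theorem majorization_symmetric_monotone_norm {n : ℕ}
    (u v : Fin n → ℝ) (hu : ∀ j, 0 ≤ u j) (hv : ∀ j, 0 ≤ v j)
    (α : ℝ) (hα : 0 ≤ α)
    (ψ : (Fin n → ℝ) → ℝ)
    (hψ_zero : ∀ w, ψ w = 0 ↔ w = 0)
    (hψ_tri : ∀ w₁ w₂, ψ (w₁ + w₂) ≤ ψ w₁ + ψ w₂)
    (hψ_hom : ∀ (θ : ℝ) w, ψ (θ • w) = |θ| * ψ w)
    (hψ_mono : ∀ w₁ w₂, (∀ j, 0 ≤ w₁ j) → (∀ j, w₁ j ≤ w₂ j) → ψ w₁ ≤ ψ w₂)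
    (hψ_sym : ∀ w (π : Equiv.Perm (Fin n)), ψ (w ∘ π) = ψ w)
    (htop : ∀ k, 1 ≤ k → k ≤ n → topk k u ≤ α * topk k v) :
    ψ u ≤ α * ψ v := by
  have hψ_convex : ConvexOn ℝ (Set.Ici 0) ψ :=
    (Seminorm.of ψ hψ_tri hψ_hom).convexOn.subset (Set.subset_univ _) (convex_Ici 0)
  calc ψ u ≤ ψ (α • v) :=
        majorization_symmetric_monotone_norm_general hu (smul_nonneg hα hv)
          hψ_convex.quasiconvexOn (fun w₁ hw₁ w₂ _ hw ↦ hψ_mono w₁ w₂ hw₁ hw)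
          (fun w _ π ↦ hψ_sym w π)
          (by simpa only [topk_smul, abs_of_nonneg hα] using htop)
    _ = α * ψ v := by rw [hψ_hom, abs_of_nonneg hα]
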